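/- Let r ∈ (0,1] and let f : 𝔹 → ℂ be holomorphic and F(x) = f(x)·x for x ∈ 𝔹. Then F is starlike on B_r if and only if for every u ∈ X with ‖u‖ = 1 the function f_u(ζ) = ζ·f(ζu) is starlike on 𝕌_r. -/

import Mathlib

open Metric Set

noncomputable section

/-- A holomorphic map is biholomorphic on an open set `s` if it is holomorphic and injective
on `s` and admits a holomorphic inverse on the image `f '' s`. -/
def IsBiholoOn {E₁ E₂ : Type*} [NormedAddCommGroup E₁] [NormedSpace ℂ E₁]
    [NormedAddCommGroup E₂] [NormedSpace ℂ E₂] (f : E₁ → E₂) (s : Set E₁) : Prop :=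
  DifferentiableOn ℂ f s ∧ Set.InjOn f s ∧
    ∃ g : E₂ → E₁, DifferentiableOn ℂ g (f '' s) ∧ ∀ x ∈ s, g (f x) = x

/-- `f` is starlike on `s` if `f 0 = 0`, `f` is biholomorphic on `s` and the image `f '' s`
is starlike with respect to the origin. -/
def IsStarlikeOn {E₁ E₂ : Type*} [NormedAddCommGroup E₁] [NormedSpace ℂ E₁]
    [NormedAddCommGroup E₂] [NormedSpace ℂ E₂] (f : E₁ → E₂) (s : Set E₁) : Prop :=
  IsBiholoOn f s ∧ f 0 = 0 ∧
    ∀ w ∈ f '' s, ∀ t ∈ Set.Icc (0 : ℝ) 1, t • w ∈ f '' s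

/-!
The map `F(x) = f(x)·x` sends each complex line `ℂ·u` into itself and acts on it as `f_u`, so
injectivity and starlikeness of the image are read off line by line. What remains is holomorphy of
the inverse. The derivative `f(x)·id + f'(x)(·)x` is a rank-one perturbation of a multiple of the
identity, invertible because `f(x) ≠ 0` and, for `x = ζu`, `f(x) + f'(x)x = f_u'(ζ) ≠ 0`. Solving
`F(x) = w` amounts to finding a scalar `z` with `z·f(zw) = 1` and setting `x = zw`; by Hurwitz's
theorem such a `z` persists under small perturbations of `w`. Hence `F` is open, its inverse is
continuous, and a continuous inverse is differentiable wherever `F'` is invertible.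
-/

open Filter Topology Bornology

section Hurwitz

-- The maximum modulus principle for `1 / φ`.
theorem exists_eq_zero_of_norm_lt_of_frontier {E : Type*} [NormedAddCommGroup E] [NormedSpace ℂ E]
    [Nontrivial E] {φ : E → ℂ} {U : Set E} {z : E} {δ : ℝ} (hU : IsBounded U)
    (hφ : DiffContOnCl ℂ φ U) (hδ : ∀ w ∈ frontier U, δ ≤ ‖φ w‖) (hz : z ∈ closure U)
    (hzδ : ‖φ z‖ < δ) : ∃ w ∈ closure U, φ w = 0 := by
  by_contra! hne
  have hδ0 : 0 < δ := (norm_nonneg _).trans_lt hzδ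
  have hle : ‖φ⁻¹ z‖ ≤ δ⁻¹ :=
    Complex.norm_le_of_forall_mem_frontier_norm_le hU (hφ.inv hne)
      (fun w hw => by simpa using inv_anti₀ hδ0 (hδ w hw)) hz
  rw [Pi.inv_apply, norm_inv, inv_le_inv₀ (norm_pos_iff.2 (hne z hz)) hδ0] at hle
  exact hzδ.not_ge hle

theorem eventually_exists_eq_zero_of_isolated_zero {Y : Type*} [TopologicalSpace Y]
    {φ : Y × ℂ → ℂ} {P : Y × ℂ → Prop} {y₀ : Y} {z₀ : ℂ}
    (hcont : ∀ᶠ p in 𝓝 (y₀, z₀), ContinuousAt φ p)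
    (hdiff : ∀ᶠ p in 𝓝 (y₀, z₀), DifferentiableAt ℂ (fun z => φ (p.1, z)) p.2)
    (h0 : φ (y₀, z₀) = 0) (hne : ∀ᶠ z in 𝓝[≠] z₀, φ (y₀, z) ≠ 0)
    (hP : ∀ᶠ p in 𝓝 (y₀, z₀), P p) :
    ∀ᶠ y in 𝓝 y₀, ∃ z, P (y, z) ∧ φ (y, z) = 0 := by
  obtain ⟨A, hA, B, hB, hAB⟩ := mem_nhds_prod_iff.1 (hcont.and (hdiff.and hP))
  obtain ⟨ε, hε, hball⟩ :=
    nhds_basis_closedBall.mem_iff.1 (inter_mem hB (eventually_nhdsWithin_iff.1 hne))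
  have hcont₀ : ∀ z ∈ closedBall z₀ ε, ContinuousAt φ (y₀, z) := fun z hz =>
    (hAB (mk_mem_prod (mem_of_mem_nhds hA) (hball hz).1)).1
  obtain ⟨δ, hδ, hsphere⟩ : ∃ δ > 0, ∀ z ∈ sphere z₀ ε, δ ≤ ‖φ (y₀, z)‖ := by
    refine (isCompact_sphere z₀ ε).exists_forall_le' (fun z hz => ?_) fun z hz => ?_
    · exact ((hcont₀ z (sphere_subset_closedBall hz)).comp
        (by fun_prop : ContinuousAt (fun z => (y₀, z)) z)).norm.continuousWithinAt
    · exact norm_pos_iff.2 ((hball (sphere_subset_closedBall hz)).2 (ne_of_mem_sphere hz hε.ne'))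
  have hsphere' : ∀ᶠ y in 𝓝 y₀, ∀ z ∈ sphere z₀ ε, δ / 2 < ‖φ (y, z)‖ := by
    refine (isCompact_sphere z₀ ε).eventually_forall_of_forall_eventually fun z hz => ?_
    exact (hcont₀ z (sphere_subset_closedBall hz)).norm.eventually_const_lt
      ((half_lt_self hδ).trans_le (hsphere z hz))
  have hcenter : ∀ᶠ y in 𝓝 y₀, ‖φ (y, z₀)‖ < δ / 2 := by
    have hc : ContinuousAt (fun y => φ (y, z₀)) y₀ :=
      (hcont₀ z₀ (mem_closedBall_self hε.le)).comp
        (f := fun y => (y, z₀)) (by fun_prop)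
    exact hc.norm.eventually_lt_const (by simpa [h0] using hδ)
  filter_upwards [hA, hsphere', hcenter] with y hy hys hyc
  have hd : DifferentiableOn ℂ (fun z => φ (y, z)) (closure (ball z₀ ε)) := by
    rw [closure_ball z₀ hε.ne']
    exact fun z hz => (hAB (mk_mem_prod hy (hball hz).1)).2.1.differentiableWithinAt
  obtain ⟨z, hz, hφz⟩ := exists_eq_zero_of_norm_lt_of_frontier isBounded_ball hd.diffContOnCl
    (by rw [frontier_ball z₀ hε.ne']; exact fun w hw => (hys w hw).le)
    (subset_closure (mem_ball_self hε)) hyc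
  rw [closure_ball z₀ hε.ne'] at hz
  exact ⟨z, (hAB (mk_mem_prod hy (hball hz).1)).2.2, hφz⟩

end Hurwitz

section Calculus

theorem isInvertible_smul_id_add_smulRight {𝕜 E : Type*} [Field 𝕜] [TopologicalSpace 𝕜]
    [AddCommGroup E] [TopologicalSpace E] [IsTopologicalAddGroup E] [Module 𝕜 E]
    [ContinuousSMul 𝕜 E] {a : 𝕜} {l : E →L[𝕜] 𝕜} {x : E} (ha : a ≠ 0) (hal : a + l x ≠ 0) :
    (a • ContinuousLinearMap.id 𝕜 E + l.smulRight x).IsInvertible := by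
  refine ContinuousLinearMap.IsInvertible.of_inverse
    (g := a⁻¹ • ContinuousLinearMap.id 𝕜 E - (a⁻¹ * (a + l x)⁻¹) • l.smulRight x) ?_ ?_ <;>
  · ext v
    simp only [ContinuousLinearMap.comp_apply, add_apply, sub_apply, smul_apply,
      ContinuousLinearMap.id_apply, ContinuousLinearMap.smulRight_apply, map_add, map_sub, map_smul]
    match_scalars <;> field_simp
    ring

theorem differentiableAt_of_leftInverse_of_nhds_le_map {𝕜 E₁ E₂ : Type*}
    [NontriviallyNormedField 𝕜] [NormedAddCommGroup E₁] [NormedSpace 𝕜 E₁]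
    [NormedAddCommGroup E₂] [NormedSpace 𝕜 E₂] {F : E₁ → E₂} {F' : E₁ →L[𝕜] E₂} {g : E₂ → E₁}
    {x : E₁} (hF : HasFDerivAt F F' x) (hF' : F'.IsInvertible)
    (hopen : 𝓝 (F x) ≤ map F (𝓝 x)) (hg : ∀ᶠ y in 𝓝 x, g (F y) = y) :
    DifferentiableAt 𝕜 g (F x) := by
  obtain ⟨e, rfl⟩ := hF'
  have hgx : g (F x) = x := hg.self_of_nhds
  have hcont : ContinuousAt g (F x) := by
    have hmap : map g (map F (𝓝 x)) = 𝓝 x := by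
      rw [map_map]
      exact (map_congr hg).trans map_id
    rw [ContinuousAt, hgx]
    exact (map_mono hopen).trans hmap.le
  have hright : ∀ᶠ w in 𝓝 (F x), F (g w) = w :=
    hopen (eventually_map.2 (hg.mono fun y hy => congrArg F hy))
  exact (HasFDerivAt.of_local_left_inverse hcont (hgx.symm ▸ hF) hright).differentiableAt

end Calculus

namespace IsBiholoOn

variable {E₁ E₂ : Type*} [NormedAddCommGroup E₁] [NormedSpace ℂ E₁]
  [NormedAddCommGroup E₂] [NormedSpace ℂ E₂]

theorem congr {F G : E₁ → E₂} {s : Set E₁} (hF : IsBiholoOn F s) (hFG : EqOn F G s) :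
    IsBiholoOn G s := by
  obtain ⟨hd, hinj, g, hg, hgF⟩ := hF
  exact ⟨hd.congr hFG.symm, hinj.congr hFG, g, hFG.image_eq ▸ hg,
    fun x hx => hFG hx ▸ hgF x hx⟩

theorem of_isInvertible_of_nhds_le_map {F : E₁ → E₂} {F' : E₁ → E₁ →L[ℂ] E₂} {s : Set E₁}
    (hs : IsOpen s) (hinj : InjOn F s) (hF : ∀ x ∈ s, HasFDerivAt F (F' x) x)
    (hF' : ∀ x ∈ s, (F' x).IsInvertible) (hopen : ∀ x ∈ s, 𝓝 (F x) ≤ map F (𝓝 x)) :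
    IsBiholoOn F s := by
  have hleft : ∀ x ∈ s, Function.invFunOn F s (F x) = x := fun x hx => hinj.leftInvOn_invFunOn hx
  refine ⟨fun x hx => (hF x hx).differentiableAt.differentiableWithinAt, hinj,
    Function.invFunOn F s, ?_, hleft⟩
  rintro _ ⟨x, hx, rfl⟩
  exact (differentiableAt_of_leftInverse_of_nhds_le_map (hF x hx) (hF' x hx) (hopen x hx)
    (eventually_of_mem (hs.mem_nhds hx) hleft)).differentiableWithinAt

theorem of_semiconj {F : E₂ → E₂} {φ : E₁ → E₁} {s : Set E₂} {i : E₁ →L[ℂ] E₂} {l : E₂ →L[ℂ] E₁}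
    (hF : IsBiholoOn F s) (hl : Function.LeftInverse l i) (hi : Function.Semiconj i φ F) :
    IsBiholoOn φ (i ⁻¹' s) := by
  obtain ⟨hd, hinj, g, hg, hgF⟩ := hF
  have hφ : φ = l ∘ F ∘ i := funext fun z => by simp only [Function.comp_apply, ← hi z, hl _]
  refine ⟨?_, fun a ha b hb hab => hl.injective (hinj ha hb ?_), l ∘ g ∘ i, ?_, fun z hz => ?_⟩
  · rw [hφ]
    exact l.differentiable.comp_differentiableOn
      (hd.comp i.differentiable.differentiableOn (mapsTo_preimage i s))
  · rw [← hi a, ← hi b, hab]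
  · refine l.differentiable.comp_differentiableOn (hg.comp i.differentiable.differentiableOn ?_)
    rintro _ ⟨z, hz, rfl⟩
    exact ⟨i z, hz, (hi z).symm⟩
  · rw [Function.comp_apply, Function.comp_apply, hi z, hgF _ hz, hl z]

theorem hasDerivAt_ne_zero {φ : ℂ → E₂} {s : Set ℂ} {z : ℂ} {d : E₂} (hφ : IsBiholoOn φ s)
    (hs : s ∈ 𝓝 z) (hd : HasDerivAt φ d z) : d ≠ 0 := by
  obtain ⟨-, -, g, hg, hgφ⟩ := hφ
  rintro rfl
  have hg' := (hg (φ z) (mem_image_of_mem φ (mem_of_mem_nhds hs))).hasFDerivWithinAt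
  have hzero : HasDerivAt (g ∘ φ) 0 z := by
    simpa using (hg'.comp_hasDerivWithinAt z hd.hasDerivWithinAt (mapsTo_image φ s)).hasDerivAt hs
  have hone : HasDerivAt (g ∘ φ) 1 z :=
    (hasDerivAt_id z).congr_of_eventuallyEq (eventually_of_mem hs hgφ)
  exact zero_ne_one (hzero.unique hone)

end IsBiholoOn

namespace IsStarlikeOn

variable {E₁ E₂ : Type*} [NormedAddCommGroup E₁] [NormedSpace ℂ E₁]
  [NormedAddCommGroup E₂] [NormedSpace ℂ E₂] {F G : E₁ → E₂} {s : Set E₁}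

theorem congr (hF : IsStarlikeOn F s) (h0 : (0 : E₁) ∈ s) (hFG : EqOn F G s) :
    IsStarlikeOn G s :=
  ⟨hF.1.congr hFG, hFG h0 ▸ hF.2.1, hFG.image_eq ▸ hF.2.2⟩

theorem of_subsingleton [Subsingleton E₁] (h0 : (0 : E₁) ∈ s) (hF : F 0 = 0) :
    IsStarlikeOn F s := by
  have hF' (x : E₁) : F x = 0 := Subsingleton.elim 0 x ▸ hF
  refine ⟨⟨differentiable_of_subsingleton.differentiableOn, injOn_of_subsingleton F s,
    fun _ => 0, differentiableOn_const 0, fun x _ => Subsingleton.elim 0 x⟩, hF, ?_⟩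
  rintro _ ⟨x, -, rfl⟩ t -
  exact ⟨0, h0, by rw [hF, hF', smul_zero]⟩

end IsStarlikeOn

section NormedSpace

theorem exists_norm_eq_one_smul_eq (𝕜 : Type*) {E : Type*} [RCLike 𝕜] [NormedAddCommGroup E]
    [NormedSpace 𝕜 E] [Nontrivial E] (x : E) : ∃ u : E, ‖u‖ = 1 ∧ ∃ z : 𝕜, z • u = x := by
  have hunit {y : E} (hy : y ≠ 0) : ‖(‖y‖ : 𝕜)⁻¹ • y‖ = 1 := norm_smul_inv_norm hy
  rcases eq_or_ne x 0 with rfl | hx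
  · obtain ⟨y, hy⟩ := exists_ne (0 : E)
    exact ⟨_, hunit hy, 0, zero_smul 𝕜 _⟩
  · exact ⟨_, hunit hx, ‖x‖, smul_inv_smul₀ (by simpa using hx) x⟩

theorem preimage_smul_ball_zero {𝕜 E : Type*} [NormedField 𝕜] [SeminormedAddCommGroup E]
    [NormedSpace 𝕜 E] {u : E} (hu : ‖u‖ = 1) (r : ℝ) :
    (fun z : 𝕜 => z • u) ⁻¹' ball 0 r = ball 0 r := by
  ext z
  simp [norm_smul, hu]

end NormedSpace

section RadialMap

variable {X : Type*} [NormedAddCommGroup X] [NormedSpace ℂ X] {f : X → ℂ} {s : Set X}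
  {u x y : X} {c z : ℂ}

/-- The map `F(x) = f(x)·x` attached to a scalar function `f`; it preserves complex lines through
the origin. -/
def radialMap (f : X → ℂ) (x : X) : X := f x • x

/-- The function `f_u(ζ) = ζ·f(ζu)`: the restriction of `radialMap f` to the line `ℂ·u`, in the
coordinate `ζ`. -/
def radialSlice (f : X → ℂ) (u : X) (ζ : ℂ) : ℂ := ζ * f (ζ • u)

theorem radialMap_smul (f : X → ℂ) (z : ℂ) (u : X) :
    radialMap f (z • u) = radialSlice f u z • u := by
  rw [radialMap, radialSlice, smul_smul, mul_comm]

theorem radialMap_zero (f : X → ℂ) : radialMap f 0 = 0 := smul_zero _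

theorem radialSlice_zero (f : X → ℂ) (u : X) : radialSlice f u 0 = 0 := zero_mul _

theorem exists_smul_eq_of_radialMap_eq_smul (hy : f y ≠ 0) (h : radialMap f y = c • u) :
    ∃ b : ℂ, b • u = y :=
  ⟨(f y)⁻¹ * c, by rw [mul_smul, ← h, radialMap, inv_smul_smul₀ hy]⟩

theorem hasFDerivAt_radialMap (hf : DifferentiableAt ℂ f x) :
    HasFDerivAt (radialMap f)
      (f x • ContinuousLinearMap.id ℂ X + (fderiv ℂ f x).smulRight x) x :=
  hf.hasFDerivAt.smul (hasFDerivAt_id x)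

theorem hasDerivAt_radialSlice (hf : DifferentiableAt ℂ f (z • u)) :
    HasDerivAt (radialSlice f u) (f (z • u) + fderiv ℂ f (z • u) (z • u)) z := by
  have hline : HasDerivAt (fun ζ : ℂ => ζ • u) u z := by
    simpa using (hasDerivAt_id z).smul_const u
  refine ((hasDerivAt_id z).mul (hf.hasFDerivAt.comp_hasDerivAt z hline)).congr_deriv ?_
  simp

theorem nhds_radialMap_le (hf : ∀ᶠ y in 𝓝 x, DifferentiableAt ℂ f y) (hfx : f x ≠ 0)
    (hdx : f x + fderiv ℂ f x x ≠ 0) : 𝓝 (radialMap f x) ≤ map (radialMap f) (𝓝 x) := by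
  intro S hS
  set w₀ : X := radialMap f x
  set z₀ : ℂ := (f x)⁻¹ with hz₀
  have hx : z₀ • w₀ = x := inv_smul_smul₀ hfx x
  have htend : Tendsto (fun p : X × ℂ => p.2 • p.1) (𝓝 (w₀, z₀)) (𝓝 x) :=
    hx ▸ (by fun_prop : Continuous fun p : X × ℂ => p.2 • p.1).tendsto (w₀, z₀)
  have hdiff : ∀ᶠ p in 𝓝 (w₀, z₀), DifferentiableAt ℂ f (p.2 • p.1) := htend.eventually hf
  have hderiv : HasDerivAt (radialSlice f w₀) (f x + fderiv ℂ f x x) z₀ := by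
    have := hasDerivAt_radialSlice (u := w₀) (z := z₀) (hx.symm ▸ hf.self_of_nhds)
    rwa [hx] at this
  have hzero : radialSlice f w₀ z₀ - 1 = 0 := by
    rw [radialSlice, hx, hz₀, inv_mul_cancel₀ hfx, sub_self]
  have hsolve : ∀ᶠ w in 𝓝 w₀, ∃ z : ℂ,
      radialMap f (z • w) ∈ S ∧ radialSlice f w z - 1 = 0 := by
    refine eventually_exists_eq_zero_of_isolated_zero
      (φ := fun p : X × ℂ => radialSlice f p.1 p.2 - 1)
      (P := fun p => radialMap f (p.2 • p.1) ∈ S) (hdiff.mono fun p hp => ?_)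
      (hdiff.mono fun p hp => (hasDerivAt_radialSlice hp).differentiableAt.sub_const 1)
      hzero ?_ (htend.eventually hS)
    · have hfp : ContinuousAt (fun q : X × ℂ => f (q.2 • q.1)) p :=
        ContinuousAt.comp (f := fun q : X × ℂ => q.2 • q.1) hp.continuousAt (by fun_prop)
      exact (continuousAt_snd.mul hfp).sub continuousAt_const
    · simpa only [sub_ne_zero] using hderiv.eventually_ne hdx
  filter_upwards [hsolve] with w ⟨z, hzS, hz⟩
  rwa [radialMap_smul, sub_eq_zero.1 hz, one_smul] at hzS

theorem isBiholoOn_radialMap (hs : IsOpen s) (hf : DifferentiableOn ℂ f s)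
    (hinj : InjOn (radialMap f) s) (hf0 : ∀ x ∈ s, f x ≠ 0)
    (hd0 : ∀ x ∈ s, f x + fderiv ℂ f x x ≠ 0) : IsBiholoOn (radialMap f) s :=
  .of_isInvertible_of_nhds_le_map hs hinj
    (fun _ hx => hasFDerivAt_radialMap (hf.differentiableAt (hs.mem_nhds hx)))
    (fun x hx => isInvertible_smul_id_add_smulRight (hf0 x hx) (hd0 x hx))
    (fun x hx => nhds_radialMap_le (hf.eventually_differentiableAt (hs.mem_nhds hx))
      (hf0 x hx) (hd0 x hx))

theorem add_fderiv_ne_zero_of_isBiholoOn_radialSlice {t : Set ℂ}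
    (hφ : IsBiholoOn (radialSlice f u) t) (hz : t ∈ 𝓝 z) (hf : DifferentiableAt ℂ f (z • u)) :
    f (z • u) + fderiv ℂ f (z • u) (z • u) ≠ 0 :=
  hφ.hasDerivAt_ne_zero hz (hasDerivAt_radialSlice hf)

theorem ne_zero_of_isBiholoOn_radialSlice {t : Set ℂ} (hφ : IsBiholoOn (radialSlice f u) t)
    (h0 : t ∈ 𝓝 0) (hf : DifferentiableAt ℂ f 0) (hz : z ∈ t) : f (z • u) ≠ 0 := by
  intro hfz
  obtain rfl : z = 0 := hφ.2.1 hz (mem_of_mem_nhds h0) <| by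
    rw [radialSlice_zero, radialSlice, hfz, mul_zero]
  have hd := add_fderiv_ne_zero_of_isBiholoOn_radialSlice hφ h0 (by rwa [zero_smul])
  rw [hfz, zero_smul, map_zero, add_zero] at hd
  exact hd rfl

theorem injOn_radialMap [Nontrivial X] (hf0 : ∀ x ∈ s, f x ≠ 0)
    (hinj : ∀ u : X, ‖u‖ = 1 → InjOn (radialSlice f u) ((· • u) ⁻¹' s)) :
    InjOn (radialMap f) s := by
  intro x hx y hy hxy
  obtain ⟨u, hu, z, rfl⟩ := exists_norm_eq_one_smul_eq ℂ x
  have hyu : radialMap f y = radialSlice f u z • u := by rw [← hxy, radialMap_smul]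
  obtain ⟨b, rfl⟩ := exists_smul_eq_of_radialMap_eq_smul (hf0 y hy) hyu
  rw [radialMap_smul] at hyu
  rw [hinj u hu hx hy (smul_left_injective ℂ (ne_zero_of_norm_ne_zero (by simp [hu])) hyu).symm]

theorem isStarlikeOn_radialSlice (hF : IsStarlikeOn (radialMap f) s) (h0 : (0 : X) ∈ s)
    (hu : u ≠ 0) : IsStarlikeOn (radialSlice f u) ((· • u) ⁻¹' s) := by
  obtain ⟨l, hl⟩ := SeparatingDual.exists_eq_one (R := ℂ) hu
  refine ⟨hF.1.of_semiconj (i := ContinuousLinearMap.toSpanSingleton ℂ u) (l := l)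
    (fun z => by simp [hl]) (fun z => (radialMap_smul f z u).symm), radialSlice_zero f u, ?_⟩
  rintro _ ⟨z, hz, rfl⟩ t ht
  obtain ⟨y, hy, hyt⟩ := hF.2.2 _ (mem_image_of_mem _ hz) t ht
  rw [radialMap_smul, ← smul_assoc] at hyt
  by_cases hfy : f y = 0
  · rw [radialMap, hfy, zero_smul, eq_comm, smul_eq_zero_iff_left hu] at hyt
    exact ⟨0, by simpa using h0, by rw [radialSlice_zero, hyt]⟩
  · obtain ⟨b, rfl⟩ := exists_smul_eq_of_radialMap_eq_smul hfy hyt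
    rw [radialMap_smul] at hyt
    exact ⟨b, hy, smul_left_injective ℂ hu hyt⟩

theorem isStarlikeOn_radialMap [Nontrivial X] (hs : IsOpen s) (h0 : (0 : X) ∈ s)
    (hf : DifferentiableOn ℂ f s)
    (hφ : ∀ u : X, ‖u‖ = 1 → IsStarlikeOn (radialSlice f u) ((· • u) ⁻¹' s)) :
    IsStarlikeOn (radialMap f) s := by
  have hfd : ∀ x ∈ s, DifferentiableAt ℂ f x := fun x hx => hf.differentiableAt (hs.mem_nhds hx)
  have hnhds : ∀ (u : X) (z : ℂ), z • u ∈ s → (· • u) ⁻¹' s ∈ 𝓝 z := fun u z hz =>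
    (hs.preimage (by fun_prop)).mem_nhds hz
  have hf0 : ∀ x ∈ s, f x ≠ 0 := by
    intro x hx
    obtain ⟨u, hu, z, rfl⟩ := exists_norm_eq_one_smul_eq ℂ x
    exact ne_zero_of_isBiholoOn_radialSlice (hφ u hu).1 (hnhds u 0 (by rwa [zero_smul]))
      (hfd 0 h0) hx
  have hd0 : ∀ x ∈ s, f x + fderiv ℂ f x x ≠ 0 := by
    intro x hx
    obtain ⟨u, hu, z, rfl⟩ := exists_norm_eq_one_smul_eq ℂ x
    exact add_fderiv_ne_zero_of_isBiholoOn_radialSlice (hφ u hu).1 (hnhds u z hx) (hfd _ hx)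
  refine ⟨isBiholoOn_radialMap hs hf (injOn_radialMap hf0 fun u hu => (hφ u hu).1.2.1) hf0 hd0,
    radialMap_zero f, ?_⟩
  rintro _ ⟨x, hx, rfl⟩ t ht
  obtain ⟨u, hu, z, rfl⟩ := exists_norm_eq_one_smul_eq ℂ x
  obtain ⟨b, hb, hbt⟩ := (hφ u hu).2.2 _ (mem_image_of_mem _ hx) t ht
  exact ⟨b • u, hb, by rw [radialMap_smul, radialMap_smul, hbt, smul_assoc]⟩

end RadialMap

theorem stmt1_general {X : Type*} [NormedAddCommGroup X] [NormedSpace ℂ X] {s : Set X}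
    (hs : IsOpen s) (h0 : (0 : X) ∈ s) {f : X → ℂ} (hf : DifferentiableOn ℂ f s)
    {F : X → X} (hF : ∀ x ∈ s, F x = f x • x) :
    IsStarlikeOn F s ↔
      ∀ u : X, ‖u‖ = 1 → IsStarlikeOn (fun ζ : ℂ => ζ * f (ζ • u)) ((· • u) ⁻¹' s) := by
  have hFf : EqOn F (radialMap f) s := hF
  refine ⟨fun h u hu => isStarlikeOn_radialSlice (h.congr h0 hFf) h0
    (ne_zero_of_norm_ne_zero (by simp [hu])), fun h => ?_⟩
  rcases subsingleton_or_nontrivial X with hX | hX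
  · exact .of_subsingleton h0 ((hFf h0).trans (radialMap_zero f))
  · exact (isStarlikeOn_radialMap hs h0 hf h).congr h0 hFf.symm

/-- **Starlikeness criterion.** Let `F(x) = f(x)·x` on the unit ball `𝔹` of a complex Banach
space `X`, with `f` holomorphic on `𝔹`, and let `0 < r ≤ 1`. Then `F` is starlike on `B_r`
if and only if, for every `u` with `‖u‖ = 1`, the function `f_u(ζ) = ζ·f(ζu)` is starlike
on the disc `𝕌_r`. -/
theorem stmt1 {X : Type*} [NormedAddCommGroup X] [NormedSpace ℂ X] [CompleteSpace X]
    (r : ℝ) (hr : r ∈ Set.Ioc (0 : ℝ) 1)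
    (f : X → ℂ) (hf : DifferentiableOn ℂ f (ball (0 : X) 1))
    (F : X → X) (hF : ∀ x ∈ ball (0 : X) 1, F x = f x • x) :
    IsStarlikeOn F (ball (0 : X) r) ↔
      ∀ u : X, ‖u‖ = 1 →
        IsStarlikeOn (fun ζ : ℂ => ζ * f (ζ • u)) (ball (0 : ℂ) r) := by
  rw [stmt1_general isOpen_ball (mem_ball_self hr.1) (hf.mono (ball_subset_ball hr.2))
    fun x hx => hF x (ball_subset_ball hr.2 hx)]
  exact forall₂_congr fun u hu => by rw [preimage_smul_ball_zero hu]
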